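/- Let r ≥ 1 and ε ≥ 1 be integers and let σ ∈ {+1, −1}. For all positive real numbers α_0, α_1 and all integers l_0, l̃_0, l_1, l̃_1 with 0 ≤ l_0, l̃_0, l_1, l̃_1 ≤ 2^r − 1: if α_0 · e^{i·2πl_0/2^r} + α_1 · e^{i(2πl_1/2^r + σπ/2^{r+ε})} = α_0 · e^{i·2πl̃_0/2^r} + α_1 · e^{i(2πl̃_1/2^r + σπ/2^{r+ε})}, then l_0 = l̃_0 and l_1 = l̃_1. In other words, the phase constellations S_0 = {e^{i·2πl/2^r} : 0 ≤ l ≤ 2^r−1} and S_{1} = e^{iσπ/2^{r+ε}}·S_0 form a UDCP with respect to any positive weights. (Step 1 of the proof of Proposition 1) -/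

import Mathlib

/-!
Conjugation acts as inversion on the unit circle. Conjugating `a (z - z') = b (w' - w)`, with
`a`, `b` real and all four points on the unit circle, therefore divides the left side by `-z z'`
and the right side by `-w w'`: if the sides do not vanish, then `z z' = w w'`. For `N`-th roots of
unity `z`, `z'` and points `w`, `w'` of their rotation by `u`, this forces `u ^ (2 * N) = 1`.
-/

open Complex ComplexConjugate

theorem eq_and_eq_of_mul_add_mul_eq_of_norm_eq_one {a b : ℝ} (ha : a ≠ 0) (hb : b ≠ 0)
    {z z' w w' : ℂ} (hz : ‖z‖ = 1) (hz' : ‖z'‖ = 1) (hw : ‖w‖ = 1) (hw' : ‖w'‖ = 1)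
    (hne : z * z' ≠ w * w') (h : a * z + b * w = a * z' + b * w') :
    z = z' ∧ w = w' := by
  have hconj : a * z⁻¹ + b * w⁻¹ = a * z'⁻¹ + b * w'⁻¹ := by
    simpa only [map_add, map_mul, conj_ofReal, ← inv_eq_conj, hz, hz', hw, hw'] using
      congrArg conj h
  have hz0 : z ≠ 0 := norm_ne_zero_iff.mp (by simp [hz])
  have hz0' : z' ≠ 0 := norm_ne_zero_iff.mp (by simp [hz'])
  have hw0 : w ≠ 0 := norm_ne_zero_iff.mp (by simp [hw])
  have hw0' : w' ≠ 0 := norm_ne_zero_iff.mp (by simp [hw'])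
  have hcross : a * (z - z') * (w * w') = b * (w' - w) * (z * z') := by
    field_simp at hconj
    linear_combination -hconj
  have hzero : (z * z' - w * w') * (a * (z - z')) = 0 := by
    linear_combination z * z' * h - hcross
  have hzz' : z = z' := by
    simpa [sub_eq_zero, hne, ha] using hzero
  subst hzz'
  exact ⟨rfl, by simpa [hb] using h⟩

theorem eq_and_eq_of_mul_add_mul_eq_of_pow_eq_one {a b : ℝ} (ha : a ≠ 0) (hb : b ≠ 0)
    {N : ℕ} {u : ℂ} (hu : ‖u‖ = 1) (huN : u ^ (2 * N) ≠ 1)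
    {z z' w w' : ℂ} (hz : z ^ N = 1) (hz' : z' ^ N = 1) (hw : w ^ N = 1) (hw' : w' ^ N = 1)
    (h : a * z + b * (w * u) = a * z' + b * (w' * u)) :
    z = z' ∧ w = w' := by
  have hN : N ≠ 0 := by
    rintro rfl
    exact huN (pow_zero u)
  have hnorm {x : ℂ} (hx : x ^ N = 1) : ‖x‖ = 1 := norm_eq_one_of_pow_eq_one hx hN
  have hnorm_mul {x : ℂ} (hx : x ^ N = 1) : ‖x * u‖ = 1 := by rw [norm_mul, hnorm hx, hu, one_mul]
  have hne : z * z' ≠ w * u * (w' * u) := fun heq ↦ huN <| calc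
    u ^ (2 * N) = (w * u * (w' * u)) ^ N := by
      rw [mul_mul_mul_comm, ← sq, mul_pow, mul_pow, hw, hw', one_mul, one_mul, ← pow_mul]
    _ = 1 := by rw [← heq, mul_pow, hz, hz', one_mul]
  have hu0 : u ≠ 0 := norm_ne_zero_iff.mp (by simp [hu])
  exact (eq_and_eq_of_mul_add_mul_eq_of_norm_eq_one ha hb (hnorm hz) (hnorm hz')
    (hnorm_mul hw) (hnorm_mul hw') hne h).imp_right (mul_right_cancel₀ hu0)

theorem exp_I_mul_pow_two_mul_ne_one {N : ℕ} {φ : ℝ} (hφ : ∀ k : ℤ, N * φ ≠ k * Real.pi) :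
    exp (I * φ) ^ (2 * N) ≠ 1 := by
  rw [← exp_nat_mul, Ne, exp_eq_one_iff]
  rintro ⟨k, hk⟩
  refine hφ k (ofReal_injective (mul_left_cancel₀ two_pi_I_ne_zero ?_))
  push_cast at hk ⊢
  linear_combination Real.pi * hk

theorem exp_I_mul_two_pi_mul_div (N l : ℕ) :
    exp (I * (2 * Real.pi * l / N : ℝ)) = exp (2 * Real.pi * I / N) ^ l := by
  rw [← exp_nat_mul]
  congr 1
  push_cast
  ring

theorem two_pow_mul_odd_mul_pi_div_ne {m : ℤ} (hm : Odd m) (r : ℕ) {ε : ℕ} (hε : ε ≠ 0) (k : ℤ) :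
    2 ^ r * (m * Real.pi / 2 ^ (r + ε)) ≠ k * Real.pi := by
  intro h
  have hm_cast : (m : ℝ) = 2 ^ ε * k := by
    rw [pow_add] at h
    field_simp at h
    exact h
  have hm_eq : m = 2 ^ ε * k := mod_cast hm_cast
  exact Int.not_even_iff_odd.mpr hm (hm_eq ▸ (even_two.pow_of_ne_zero hε).mul_right k)

theorem step1_UDCP_general {N : ℕ} {φ : ℝ} (hφ : ∀ k : ℤ, N * φ ≠ k * Real.pi)
    {α0 α1 : ℝ} (hα0 : α0 ≠ 0) (hα1 : α1 ≠ 0)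
    {l0 l0' l1 l1' : ℕ} (hl0 : l0 < N) (hl0' : l0' < N) (hl1 : l1 < N) (hl1' : l1' < N)
    (heq : α0 * exp (I * (2 * Real.pi * l0 / N : ℝ))
        + α1 * exp (I * (2 * Real.pi * l1 / N + φ : ℝ))
      = α0 * exp (I * (2 * Real.pi * l0' / N : ℝ))
        + α1 * exp (I * (2 * Real.pi * l1' / N + φ : ℝ))) :
    l0 = l0' ∧ l1 = l1' := by
  have hζ : IsPrimitiveRoot (exp (2 * Real.pi * I / N)) N :=
    isPrimitiveRoot_exp N (Nat.ne_zero_of_lt hl0)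
  have hpow (l : ℕ) : (exp (2 * Real.pi * I / N) ^ l) ^ N = 1 := by
    rw [pow_right_comm, hζ.pow_eq_one, one_pow]
  have hsplit (l : ℕ) : exp (I * (2 * Real.pi * l / N + φ : ℝ)) =
      exp (2 * Real.pi * I / N) ^ l * exp (I * φ) := by
    rw [ofReal_add, mul_add, exp_add, exp_I_mul_two_pi_mul_div]
  simp only [hsplit, exp_I_mul_two_pi_mul_div] at heq
  exact (eq_and_eq_of_mul_add_mul_eq_of_pow_eq_one hα0 hα1 (norm_exp_I_mul_ofReal φ)
    (exp_I_mul_pow_two_mul_ne_one hφ) (hpow l0) (hpow l0') (hpow l1) (hpow l1') heq).imp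
    (hζ.pow_inj hl0 hl0') (hζ.pow_inj hl1 hl1')

/-- **Step 1 of the proof of Proposition 1.** The base phase constellation
`S₀ = {e^{i·2πl/2^r}}` and its rotation by `σ·π/2^(r+ε)` (with `σ = ±1`) form a UDCP
with respect to arbitrary positive weights. -/
theorem step1_UDCP
    (r ε : ℕ) (hr : 1 ≤ r) (hε : 1 ≤ ε)
    (σ : ℝ) (hσ : σ = 1 ∨ σ = -1)
    (α0 α1 : ℝ) (hα0 : 0 < α0) (hα1 : 0 < α1)
    (l0 l0' l1 l1' : ℕ)
    (hl0 : l0 ≤ 2 ^ r - 1) (hl0' : l0' ≤ 2 ^ r - 1)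
    (hl1 : l1 ≤ 2 ^ r - 1) (hl1' : l1' ≤ 2 ^ r - 1)
    (heq : (α0 : ℂ) * Complex.exp (Complex.I * ((2 * Real.pi * (l0 : ℝ) / 2 ^ r : ℝ) : ℂ))
        + (α1 : ℂ) * Complex.exp (Complex.I *
            ((2 * Real.pi * (l1 : ℝ) / 2 ^ r + σ * Real.pi / 2 ^ (r + ε) : ℝ) : ℂ))
      = (α0 : ℂ) * Complex.exp (Complex.I * ((2 * Real.pi * (l0' : ℝ) / 2 ^ r : ℝ) : ℂ))
        + (α1 : ℂ) * Complex.exp (Complex.I *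
            ((2 * Real.pi * (l1' : ℝ) / 2 ^ r + σ * Real.pi / 2 ^ (r + ε) : ℝ) : ℂ))) :
    l0 = l0' ∧ l1 = l1' := by
  obtain ⟨m, hm, rfl⟩ : ∃ m : ℤ, Odd m ∧ (m : ℝ) = σ := by
    rcases hσ with rfl | rfl
    exacts [⟨1, odd_one, Int.cast_one⟩, ⟨-1, odd_neg_one, by simp⟩]
  have hpos : 0 < 2 ^ r := Nat.two_pow_pos r
  exact step1_UDCP_general (N := 2 ^ r)
    (mod_cast two_pow_mul_odd_mul_pi_div_ne hm r (Nat.ne_of_gt hε)) hα0.ne' hα1.ne'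
    (by omega) (by omega) (by omega) (by omega)
    (by simpa only [Nat.cast_pow, Nat.cast_ofNat] using heq)
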